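/- Let F be a finite field of odd order and f : F → F any function. Then f is pseudo-planar (i.e. x ↦ f(x+a) − f(x) + ax is a permutation of F for every a ∈ F*) if and only if the function g(x) = x² + 2f(x) is planar (i.e. x ↦ g(x+a) − g(x) is a permutation of F for every a ∈ F*). -/

import Mathlib

/-- Planar functions on an additive group: every difference of `g` in a nonzero direction is a
permutation, encoded as a bijective function. -/
def IsPlanar {G : Type*} [AddGroup G] (g : G → G) : Prop :=
  ∀ a : G, a ≠ 0 → Function.Bijective fun x => g (x + a) - g x

/-- Pseudo-planar functions on a ring: the analogue of `IsPlanar` in which the difference in the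
direction `a` is corrected by the linear term `a * x`. -/
def IsPseudoPlanar {R : Type*} [NonUnitalNonAssocRing R] (f : R → R) : Prop :=
  ∀ a : R, a ≠ 0 → Function.Bijective fun x => f (x + a) - f x + a * x

theorem bijective_mul_add_const_iff {α R : Type*} [Ring R] {u : R} (hu : IsUnit u) (c : R)
    (g : α → R) : (Function.Bijective fun x => u * g x + c) ↔ Function.Bijective g :=
  (hu.unit.mulLeft.trans (Equiv.addRight c)).comp_bijective g

theorem sq_add_two_mul_shift_sub {R : Type*} [CommRing R] (f : R → R) (a x : R) :
    ((x + a) ^ 2 + 2 * f (x + a)) - (x ^ 2 + 2 * f x) =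
      2 * (f (x + a) - f x + a * x) + a ^ 2 := by
  ring

theorem isUnit_two_of_odd_card {R : Type*} [CommRing R] [Fintype R]
    (hodd : Odd (Fintype.card R)) : IsUnit (2 : R) := by
  have two_not_dvd_char : ¬ 2 ∣ ringChar R :=
    mt (prime_dvd_char_iff_dvd_card 2).mp hodd.not_two_dvd_nat
  exact_mod_cast (isUnit_iff_not_dvd_char R 2).mpr two_not_dvd_char

theorem pseudoPlanar_iff_planar_odd_general {R : Type*} [CommRing R] (h2 : IsUnit (2 : R))
    (f : R → R) : IsPseudoPlanar f ↔ IsPlanar fun x => x ^ 2 + 2 * f x := by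
  refine forall₂_congr fun a _ => ?_
  simp only [sq_add_two_mul_shift_sub]
  exact (bijective_mul_add_const_iff h2 (a ^ 2) _).symm

/-- **Remark.** Let `F` be a finite field of odd order and `f : F → F` any function.
Then `f` is pseudo-planar (i.e. `x ↦ f (x + a) - f x + a x` is a permutation of `F` for
every `a ≠ 0`) if and only if the function `g x = x² + 2 f x` is planar (i.e.
`x ↦ g (x + a) - g x` is a permutation of `F` for every `a ≠ 0`). -/
theorem pseudoPlanar_iff_planar_odd
    (F : Type*) [Field F] [Fintype F] (hodd : Odd (Fintype.card F))
    (f : F → F) :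
    (∀ a : F, a ≠ 0 → Function.Bijective fun x => f (x + a) - f x + a * x) ↔
    (∀ a : F, a ≠ 0 → Function.Bijective fun x =>
      ((x + a) ^ 2 + 2 * f (x + a)) - (x ^ 2 + 2 * f x)) :=
  pseudoPlanar_iff_planar_odd_general (isUnit_two_of_odd_card hodd) f
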